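/- Let k ≥ 2 and 2 ≤ ℓ ≤ k be integers, let u be a real number, and let z > max(u, 0). Then ∫₀^∞ e^{−Lz} · I_{k,ℓ}(u,L) dL = 2^{1−k} · (z−u)^{1−ℓ} · z^{ℓ−k−1}. -/

import Mathlib

open Real MeasureTheory

/-- `I_{k,ℓ}(u,L)`: the integral of `exp(2u(v₁+⋯+v_{ℓ−1}))` over the open simplex
`{v ∈ ℝ^{k−1} : vᵢ > 0, v₁+⋯+v_{k−1} < L/2}` (coordinates are 0-indexed:
`v i` is `v_{i+1}`). -/
noncomputable def Ikl (k l : ℕ) (u L : ℝ) : ℝ :=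
  ∫ v in {v : Fin (k-1) → ℝ | (∀ i, 0 < v i) ∧ ∑ i, v i < L/2},
    Real.exp (2 * u * ∑ i ∈ Finset.univ.filter (fun i : Fin (k-1) => i.val < l - 1), v i)

/-- The `j`-th (1-indexed) coordinate `w_j` for `1 ≤ j ≤ k−1`, with the convention
`w_k = L/2 − (w₁+⋯+w_{k−1})`. -/
noncomputable def wcoord (k : ℕ) (L : ℝ) (w : Fin (k-1) → ℝ) (j : ℕ) : ℝ :=
  if h : j - 1 < k - 1 then w ⟨j - 1, h⟩ else L/2 - ∑ i, w i

/-- `Ĩ_{k,ℓ}(u,L)`: the integral of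
`exp(−2u(w₂+⋯+w_ℓ))·(1−e^{−w_ℓ})^{−2u}·(1−e^{−w₁})^{2u}` over the open simplex
`{w ∈ ℝ^{k−1} : wᵢ > 0, w₁+⋯+w_{k−1} < L/2}`, where `w_k = L/2 − (w₁+⋯+w_{k−1})`. -/
noncomputable def Itkl (k l : ℕ) (u L : ℝ) : ℝ :=
  ∫ w in {w : Fin (k-1) → ℝ | (∀ i, 0 < w i) ∧ ∑ i, w i < L/2},
    Real.exp (-(2*u) * ∑ j ∈ Finset.Icc 2 l, wcoord k L w j)
      * (1 - Real.exp (-(wcoord k L w l))) ^ (-(2*u))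
      * (1 - Real.exp (-(wcoord k L w 1))) ^ (2*u)

/-!
For a nonnegative function `T`, Fubini gives
`∫₀^∞ e^{-Lz} (∫_{T < L} f dμ) dL = z⁻¹ ∫ e^{-zT} f dμ`.
With `T v = 2 ∑ vᵢ` on the positive orthant and `f` the exponential of a linear form, the right-hand
side factors into one-dimensional exponential integrals.
-/

lemma integrableOn_exp_neg_mul_Ioi {b : ℝ} (hb : 0 < b) (c : ℝ) :
    IntegrableOn (fun x ↦ exp (-(x * b))) (Set.Ioi c) := by
  simpa only [neg_mul, mul_comm b] using exp_neg_integrableOn_Ioi c hb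

lemma integral_exp_neg_mul_Ioi {b : ℝ} (hb : 0 < b) (c : ℝ) :
    ∫ x in Set.Ioi c, exp (-(x * b)) = b⁻¹ * exp (-(c * b)) := by
  have h := integral_exp_mul_Ioi (neg_lt_zero.mpr hb) c
  simp only [neg_mul, neg_div_neg_eq, mul_comm b] at h
  rw [h, div_eq_inv_mul]

section SublevelSets

variable {X E : Type*} [MeasurableSpace X] [NormedAddCommGroup E] [NormedSpace ℝ E]
  {μ : Measure X} {T : X → ℝ} {f : X → E} {z : ℝ}

lemma aestronglyMeasurable_of_exp_neg_smul (hT : Measurable T)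
    (hf : AEStronglyMeasurable (fun x ↦ exp (-(T x * z)) • f x) μ) :
    AEStronglyMeasurable f μ := by
  have h_exp : AEStronglyMeasurable (fun x ↦ exp (T x * z)) μ :=
    Measurable.aestronglyMeasurable (by fun_prop)
  refine (h_exp.smul hf).congr (.of_forall fun x ↦ ?_)
  simp [smul_smul, ← exp_add]

variable [SFinite μ]

lemma integrable_prod_indicator_Ioi_exp_smul (hz : 0 < z) (hT : Measurable T)
    (hf : Integrable (fun x ↦ exp (-(T x * z)) • f x) μ) :
    Integrable (fun p : ℝ × X ↦
      (Set.Ioi (T p.2)).indicator (fun L ↦ exp (-(L * z))) p.1 • f p.2) (volume.prod μ) := by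
  have h_kernel : Measurable fun p : ℝ × X ↦
      (Set.Ioi (T p.2)).indicator (fun L ↦ exp (-(L * z))) p.1 :=
    Measurable.indicator (f := fun p : ℝ × X ↦ exp (-(p.1 * z))) (by fun_prop)
      (measurableSet_lt (hT.comp measurable_snd) measurable_fst)
  have h_snd : AEStronglyMeasurable (fun p : ℝ × X ↦ f p.2) (volume.prod μ) :=
    (aestronglyMeasurable_of_exp_neg_smul hT hf.aestronglyMeasurable).comp_snd
  refine (integrable_prod_iff' (h_kernel.aestronglyMeasurable.fun_smul h_snd)).mpr
    ⟨.of_forall fun x ↦ ?_, ?_⟩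
  · exact ((integrableOn_exp_neg_mul_Ioi hz (T x)).integrable_indicator
      measurableSet_Ioi).smul_const (f x)
  · refine (hf.norm.const_mul z⁻¹).congr (.of_forall fun x ↦ ?_)
    simp only [norm_smul, norm_indicator_eq_indicator_norm, norm_of_nonneg (exp_nonneg _)]
    rw [integral_mul_const, integral_indicator measurableSet_Ioi, integral_exp_neg_mul_Ioi hz,
      mul_assoc]

variable [CompleteSpace E]

theorem integral_exp_neg_smul_setIntegral_lt (hz : 0 < z) (hT : Measurable T)
    (hf : Integrable (fun x ↦ exp (-(T x * z)) • f x) μ) :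
    ∫ L : ℝ, exp (-(L * z)) • ∫ x in {x | T x < L}, f x ∂μ
      = z⁻¹ • ∫ x, exp (-(T x * z)) • f x ∂μ := by
  have h_inner (L : ℝ) : exp (-(L * z)) • ∫ x in {x | T x < L}, f x ∂μ
      = ∫ x, (Set.Ioi (T x)).indicator (fun L ↦ exp (-(L * z))) L • f x ∂μ := by
    rw [← integral_smul, ← integral_indicator (measurableSet_lt hT measurable_const)]
    refine integral_congr_ae (.of_forall fun x ↦ ?_)
    by_cases hx : T x < L <;> simp [hx]
  simp_rw [h_inner]
  rw [integral_integral_swap (integrable_prod_indicator_Ioi_exp_smul hz hT hf), ← integral_smul]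
  refine integral_congr_ae (.of_forall fun x ↦ ?_)
  simp only
  rw [integral_smul_const, integral_indicator measurableSet_Ioi, integral_exp_neg_mul_Ioi hz,
    mul_smul]

theorem setIntegral_Ioi_exp_neg_smul_setIntegral_lt (hz : 0 < z) (hT : Measurable T)
    (hT_nonneg : 0 ≤ᵐ[μ] T) (hf : Integrable (fun x ↦ exp (-(T x * z)) • f x) μ) :
    ∫ L in Set.Ioi (0 : ℝ), exp (-(L * z)) • ∫ x in {x | T x < L}, f x ∂μ
      = z⁻¹ • ∫ x, exp (-(T x * z)) • f x ∂μ := by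
  rw [← integral_exp_neg_smul_setIntegral_lt hz hT hf]
  refine setIntegral_eq_integral_of_forall_compl_eq_zero fun L hL ↦ ?_
  have h_null : μ {x | T x < L} = 0 := by
    refine measure_mono_null (fun x hx ↦ ?_) hT_nonneg
    exact not_le.mpr (lt_of_lt_of_le hx (Set.notMem_Ioi.mp hL))
  rw [setIntegral_measure_zero _ h_null, smul_zero]

end SublevelSets

section Orthant

variable {ι : Type*} [Fintype ι]

lemma integrableOn_pi_Ioi_exp_neg_sum {b : ι → ℝ} (hb : ∀ i, 0 < b i) :
    IntegrableOn (fun v : ι → ℝ ↦ exp (-∑ i, v i * b i)) (Set.univ.pi fun _ ↦ Set.Ioi 0) := by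
  simp only [← Finset.sum_neg_distrib, exp_sum]
  rw [IntegrableOn, volume_pi, Measure.restrict_pi_pi]
  exact .fintype_prod_dep fun i ↦ integrableOn_exp_neg_mul_Ioi (hb i) 0

lemma setIntegral_pi_Ioi_exp_neg_sum {b : ι → ℝ} (hb : ∀ i, 0 < b i) :
    ∫ v in Set.univ.pi fun _ ↦ Set.Ioi 0, exp (-∑ i, v i * b i) = ∏ i, (b i)⁻¹ := by
  simp only [← Finset.sum_neg_distrib, exp_sum]
  rw [volume_pi, Measure.restrict_pi_pi,
    integral_fintype_prod_eq_prod fun i x ↦ exp (-(x * b i))]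
  simp [integral_exp_neg_mul_Ioi (hb _)]

theorem integral_exp_neg_mul_setIntegral_simplex_exp_sum {a c : ι → ℝ} {z : ℝ} (hz : 0 < z)
    (hc : ∀ i, 0 ≤ c i) (ha : ∀ i, a i < c i * z) :
    ∫ L in Set.Ioi (0 : ℝ), exp (-(L * z)) *
        ∫ v in {v : ι → ℝ | (∀ i, 0 < v i) ∧ ∑ i, c i * v i < L}, exp (∑ i, a i * v i)
      = z⁻¹ * ∏ i, (c i * z - a i)⁻¹ := by
  let T : (ι → ℝ) → ℝ := fun v ↦ ∑ i, c i * v i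
  let orthant : Set (ι → ℝ) := Set.univ.pi fun _ ↦ Set.Ioi 0
  have h_orthant : MeasurableSet orthant := .univ_pi fun _ ↦ measurableSet_Ioi
  have hT : Measurable T := by fun_prop
  have hT_nonneg : 0 ≤ᵐ[volume.restrict orthant] T :=
    ae_restrict_of_forall_mem h_orthant fun v hv ↦
      Finset.sum_nonneg fun i _ ↦ mul_nonneg (hc i) (hv i (Set.mem_univ i)).le
  have h_simplex (L : ℝ) :
      {v : ι → ℝ | (∀ i, 0 < v i) ∧ ∑ i, c i * v i < L} = {v | T v < L} ∩ orthant := by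
    ext v
    simp [T, orthant, and_comm]
  have h_exp (v : ι → ℝ) : exp (-(T v * z)) • exp (∑ i, a i * v i)
      = exp (-∑ i, v i * (c i * z - a i)) := by
    rw [smul_eq_mul, ← exp_add, Finset.sum_mul, ← Finset.sum_neg_distrib,
      ← Finset.sum_neg_distrib, ← Finset.sum_add_distrib]
    exact congrArg exp (Finset.sum_congr rfl fun i _ ↦ by ring)
  have hb (i : ι) : 0 < c i * z - a i := sub_pos.mpr (ha i)
  have h_laplace := setIntegral_Ioi_exp_neg_smul_setIntegral_lt hz hT hT_nonneg
    (f := fun v ↦ exp (∑ i, a i * v i))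
    (by simpa only [h_exp, orthant, IntegrableOn] using integrableOn_pi_Ioi_exp_neg_sum hb)
  simp only [h_exp, setIntegral_pi_Ioi_exp_neg_sum hb, orthant, smul_eq_mul] at h_laplace
  simpa only [h_simplex, Measure.restrict_restrict (measurableSet_lt hT measurable_const)]
    using h_laplace

end Orthant

lemma prod_fin_ite_val_lt {M : Type*} [CommMonoid M] {m n : ℕ} (hmn : m ≤ n) (x y : M) :
    ∏ i : Fin n, (if i.val < m then x else y) = x ^ m * y ^ (n - m) := by
  obtain ⟨p, rfl⟩ := Nat.exists_eq_add_of_le hmn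
  simp [Fin.prod_univ_add]

lemma Ikl_eq_setIntegral_exp_sum (k l : ℕ) (u L : ℝ) :
    Ikl k l u L = ∫ v in {v : Fin (k - 1) → ℝ | (∀ i, 0 < v i) ∧ ∑ i, 2 * v i < L},
      exp (∑ i, (if i.val < l - 1 then 2 * u else 0) * v i) := by
  simp only [Ikl, lt_div_iff₀' (zero_lt_two' ℝ), Finset.sum_filter, Finset.mul_sum, mul_ite,
    ite_mul, mul_zero, zero_mul]

/-- **Laplace transform of `I_{k,ℓ}` (proof of Proposition 5.2).** For `2 ≤ ℓ ≤ k`,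
`u ∈ ℝ` and `z > max(u,0)`,
`∫₀^∞ e^{−Lz} I_{k,ℓ}(u,L) dL = 2^{1−k}(z−u)^{1−ℓ} z^{ℓ−k−1}`. -/
theorem stmt_3 (k l : ℕ) (hk : 2 ≤ k) (hl2 : 2 ≤ l) (hlk : l ≤ k)
    (u z : ℝ) (hz : max u 0 < z) :
    ∫ L in Set.Ioi (0:ℝ), Real.exp (-(L*z)) * Ikl k l u L
      = (2:ℝ)^(1 - (k:ℤ)) * (z - u)^(1 - (l:ℤ)) * z^((l:ℤ) - k - 1) := by
  have hz0 : 0 < z := (le_max_right u 0).trans_lt hz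
  have hzu : u < z := (le_max_left u 0).trans_lt hz
  have h_rate (i : Fin (k - 1)) : (if i.val < l - 1 then 2 * u else 0) < 2 * z := by
    split_ifs <;> linarith
  have h_factor (i : Fin (k - 1)) : (2 * z - if i.val < l - 1 then 2 * u else 0)⁻¹
      = if i.val < l - 1 then (2 * (z - u))⁻¹ else (2 * z)⁻¹ := by
    split_ifs <;> ring
  simp only [Ikl_eq_setIntegral_exp_sum]
  rw [integral_exp_neg_mul_setIntegral_simplex_exp_sum hz0 (fun _ ↦ zero_le_two) h_rate]
  simp only [h_factor]
  rw [prod_fin_ite_val_lt (by lia)]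
  obtain ⟨m, rfl⟩ : ∃ m, l = m + 1 := ⟨l - 1, by lia⟩
  obtain ⟨p, rfl⟩ : ∃ p, k = m + p + 1 := ⟨k - 1 - m, by lia⟩
  have h_two : 1 - ((m + p + 1 : ℕ) : ℤ) = -((m + p : ℕ) : ℤ) := by lia
  have h_sub : 1 - ((m + 1 : ℕ) : ℤ) = -(m : ℤ) := by lia
  have h_z : ((m + 1 : ℕ) : ℤ) - (m + p + 1 : ℕ) - 1 = -((p + 1 : ℕ) : ℤ) := by lia
  simp only [h_two, h_sub, h_z, zpow_neg, zpow_natCast, Nat.add_sub_cancel, Nat.add_sub_cancel_left,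
    inv_pow, mul_pow, pow_add, mul_inv]
  ring
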